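/- Let 0<ρ<1, 0<τ<1, define g(x) = [τ(1-ρ)e^{−x} / (ρ + τ(1-ρ)e^{−x})] · [1/(−log(ρ + τ(1-ρ)e^{−x}))], and let {d_k} be defined by d_0 = 0, d_{k+1} = d_k − log(ρ + τ(1-ρ)e^{−d_k}). Then for every k ∈ ℕ, g(d_{k+1})/g(d_k) ≥ ρ. -/

import Mathlib

theorem g_ratio_aux (p t s : ℝ) (hp : 0 < p) (hpt : p < t) (ht : t < 1)
    (hs : s = p + (t - p) * t) :
    p * s * (-Real.log s) ≤ t ^ 2 * (-Real.log t) := by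
  have ht0 : 0 < t := hp.trans hpt
  have hs0 : 0 < s := by rw [hs]; have := mul_pos (sub_pos.2 hpt) ht0; linarith
  have h1 : Real.log t ≤ t - 1 := Real.log_le_sub_one_of_pos ht0
  have h2 : Real.log (t / s) ≤ t / s - 1 := Real.log_le_sub_one_of_pos (div_pos ht0 hs0)
  rw [Real.log_div ht0.ne' hs0.ne'] at h2
  have h3 : s * (Real.log t - Real.log s) ≤ t - s := by
    have := mul_le_mul_of_nonneg_left h2 hs0.le
    have e : s * (t / s - 1) = t - s := by field_simp
    linarith
  have h4 := mul_le_mul_of_nonneg_left h3 hp.le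
  have hq : 0 < (t - p) * (t + p * (1 - t)) :=
    mul_pos (by linarith) (by have := mul_pos hp (sub_pos.2 ht); linarith)
  have h5 : (t - p) * (t + p * (1 - t)) * (1 - t) ≤
      (t - p) * (t + p * (1 - t)) * (-Real.log t) :=
    mul_le_mul_of_nonneg_left (by linarith) hq.le
  have e1 : (t - p) * (t + p * (1 - t)) = t ^ 2 - p * s := by rw [hs]; ring
  have e2 : (t - p) * (t + p * (1 - t)) * (1 - t) - p * (t - s)
      = (t - p) * (1 - t) * (t * (1 - p)) := by rw [hs]; ring
  have h6 : 0 ≤ (t - p) * (1 - t) * (t * (1 - p)) :=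
    mul_nonneg (mul_nonneg (by linarith) (by linarith)) (mul_nonneg ht0.le (by linarith))
  rw [e1] at h5 e2
  nlinarith

theorem g_ratio_ge_rho
    (ρ τ : ℝ) (hρ0 : 0 < ρ) (hρ1 : ρ < 1) (hτ0 : 0 < τ) (hτ1 : τ < 1)
    (g : ℝ → ℝ)
    (hg : ∀ x, g x = (τ * (1 - ρ) * Real.exp (-x) / (ρ + τ * (1 - ρ) * Real.exp (-x))) *
      (1 / (-Real.log (ρ + τ * (1 - ρ) * Real.exp (-x)))))
    (d : ℕ → ℝ) (hd0 : d 0 = 0)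
    (hd : ∀ k, d (k + 1) = d k - Real.log (ρ + τ * (1 - ρ) * Real.exp (-(d k)))) :
    ∀ k : ℕ, g (d (k + 1)) / g (d k) ≥ ρ := by
  have hc : 0 < τ * (1 - ρ) := mul_pos hτ0 (by linarith)
  have hlo : ∀ x, ρ < ρ + τ * (1 - ρ) * Real.exp (-x) := fun x => by
    have := mul_pos hc (Real.exp_pos (-x)); linarith
  have hhi : ∀ x, 0 ≤ x → ρ + τ * (1 - ρ) * Real.exp (-x) < 1 := fun x hx => by
    have h1 : Real.exp (-x) ≤ 1 := Real.exp_le_one_iff.2 (by linarith)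
    have h2 := mul_le_mul_of_nonneg_left h1 hc.le
    nlinarith
  have hdn : ∀ k, 0 ≤ d k := by
    intro k
    induction k with
    | zero => exact hd0.ge
    | succ k ih =>
      rw [hd]
      have := Real.log_neg (hρ0.trans (hlo (d k))) (hhi _ ih)
      linarith
  intro k
  have hl := hlo (d k)
  have hh := hhi _ (hdn k)
  have hl' := hlo (d (k + 1))
  have hh' := hhi _ (hdn (k + 1))
  have hE : Real.exp (-(d (k + 1))) =
      Real.exp (-(d k)) * (ρ + τ * (1 - ρ) * Real.exp (-(d k))) := by
    rw [hd, neg_sub, sub_eq_neg_add, Real.exp_add, Real.exp_log (hρ0.trans hl)]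
  have hgk := hg (d k)
  have hgk1 := hg (d (k + 1))
  rw [hE] at hgk1 hl' hh'
  have hu := mul_pos hc (Real.exp_pos (-(d k)))
  generalize Real.exp (-(d k)) = E at *
  have hs : ρ + τ * (1 - ρ) * (E * (ρ + τ * (1 - ρ) * E)) =
      ρ + ((ρ + τ * (1 - ρ) * E) - ρ) * (ρ + τ * (1 - ρ) * E) := by ring
  have key := g_ratio_aux ρ _ _ hρ0 hl hh hs
  have hm : τ * (1 - ρ) * (E * (ρ + τ * (1 - ρ) * E)) =
    (τ * (1 - ρ) * E) * (ρ + τ * (1 - ρ) * E) := by ring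
  rw [hm] at key hgk1 hl' hh'
  generalize τ * (1 - ρ) * E = u at *
  have ht0 := hρ0.trans hl
  have hs0 := hρ0.trans hl'
  have hLt : 0 < -Real.log (ρ + u) := neg_pos.2 (Real.log_neg ht0 hh)
  have hLs : 0 < -Real.log (ρ + u * (ρ + u)) := neg_pos.2 (Real.log_neg hs0 hh')
  rw [hgk, hgk1, ge_iff_le]
  generalize -Real.log (ρ + u) = A at *
  generalize -Real.log (ρ + u * (ρ + u)) = B at *
  generalize ρ + u * (ρ + u) = s at *
  generalize ρ + u = t at *
  have : u * t / s * (1 / B) / (u / t * (1 / A)) = t ^ 2 * A / (s * B) := by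
    field_simp
  rw [this, le_div_iff₀ (mul_pos hs0 hLs)]
  linarith
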